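/- Non-stabilizerness–entanglement relation (Theorem 1 of the paper): for every natural number n ≥ 1, every integer α ≥ 2, and every unit vector ψ : (Fin n → Fin 2) → ℂ, one has (1 - α) · M_α(ψ) + E₂(ψ'_α) = Real.log d, where d = 2^n, M_α(ψ) = (1 - α)⁻¹ · Real.log (A_α(ψ)) is the α-Stabilizer Rényi Entropy, and E₂(ψ'_α) = - Real.log ( Re( trace(χ * χ) ) ) is the 2-Rényi entropy of entanglement of ψ'_α across the ancilla/copies bipartition, with χ the ancilla marginal matrix indexed by (Fin n → Fin 4) with entries χ i j = Σ over all f : Fin α → Fin n → Fin 2 of ψ'_α (i, f) · conj(ψ'_α (j, f)). -/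

import Mathlib

open Complex Matrix BigOperators

/-- The single-qubit Pauli matrices `Q₀ = 1`, `Q₁ = X`, `Q₂ = Y`, `Q₃ = Z`. -/
noncomputable def Q : Fin 4 → Matrix (Fin 2) (Fin 2) ℂ :=
  ![1, !![0, 1; 1, 0], !![0, -Complex.I; Complex.I, 0], !![1, 0; 0, -1]]

/-- The `n`-qubit Pauli string `P_s`, the Kronecker product of the `Q (s k)`. -/
noncomputable def P {n : ℕ} (s : Fin n → Fin 4) :
    Matrix (Fin n → Fin 2) (Fin n → Fin 2) ℂ :=
  Matrix.of fun i j => ∏ k, Q (s k) (i k) (j k)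


/-- `A_α(ψ) = d⁻¹ ∑_s ⟨ψ, P_s ψ⟩^(2α)` with `d = 2^n`. -/
noncomputable def A (n α : ℕ) (ψ : (Fin n → Fin 2) → ℂ) : ℝ :=
  (2 ^ n : ℝ)⁻¹ * ∑ s : Fin n → Fin 4, (star ψ ⬝ᵥ (P s).mulVec ψ).re ^ (2 * α)


/-- The purified state `ψ′_α = d⁻¹ ∑_t |t⟩ ⊗ (P_t ψ)^⊗α`. -/
noncomputable def psi' (n α : ℕ) (ψ : (Fin n → Fin 2) → ℂ) :
    (Fin n → Fin 4) × (Fin α → Fin n → Fin 2) → ℂ :=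
  fun p => (2 ^ n : ℂ)⁻¹ * ∏ m, (P p.1).mulVec ψ (p.2 m)


/-- Ancilla marginal of the purified state. -/
noncomputable def chi (n α : ℕ) (ψ : (Fin n → Fin 2) → ℂ) :
    Matrix (Fin n → Fin 4) (Fin n → Fin 4) ℂ :=
  Matrix.of fun i j => ∑ f : Fin α → Fin n → Fin 2,
    psi' n α ψ (i, f) * (starRingEnd ℂ) (psi' n α ψ (j, f))

/-- Product of Paulis up to phase. -/
def opx : Fin 4 → Fin 4 → Fin 4 :=
  ![![0, 1, 2, 3], ![1, 0, 3, 2], ![2, 3, 0, 1], ![3, 2, 1, 0]]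

/-- The phase. -/
noncomputable def phs : Fin 4 → Fin 4 → ℂ :=
  ![![1, 1, 1, 1], ![1, 1, Complex.I, -Complex.I], ![1, -Complex.I, 1, Complex.I],
    ![1, Complex.I, -Complex.I, 1]]

lemma opx_invol (a b : Fin 4) : opx a (opx a b) = b := by
  revert a b; decide

lemma opx_comm (a b : Fin 4) : opx a b = opx b a := by
  revert a b; decide

lemma phs_mul (a b : Fin 4) : phs a b * phs b a = 1 := by
  fin_cases a <;> fin_cases b <;> simp [phs]

lemma Q_mul (a b : Fin 4) (x y : Fin 2) :
    ∑ z, Q a x z * Q b z y = phs a b * Q (opx a b) x y := by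
  fin_cases a <;> fin_cases b <;> fin_cases x <;> fin_cases y <;>
    simp [phs, opx, Q, Fin.sum_univ_two, Matrix.one_apply]

lemma Q_herm (a : Fin 4) (x y : Fin 2) : star (Q a x y) = Q a y x := by
  fin_cases a <;> fin_cases x <;> fin_cases y <;> simp [Q, Matrix.one_apply]

lemma P_mul {n : ℕ} (s t : Fin n → Fin 4) :
    P s * P t = (∏ k, phs (s k) (t k)) • P (fun k => opx (s k) (t k)) := by
  ext i j
  simp only [Matrix.mul_apply, P, Matrix.of_apply, Matrix.smul_apply, smul_eq_mul,
    ← Finset.prod_mul_distrib]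
  simp only [← Q_mul]
  rw [Finset.prod_univ_sum]
  simp

lemma P_herm {n : ℕ} (s : Fin n → Fin 4) : (P s)ᴴ = P s := by
  ext i j
  simp only [P, Matrix.conjTranspose_apply, Matrix.of_apply, star_prod, Q_herm]

lemma P_zero {n : ℕ} : P (fun _ : Fin n => (0 : Fin 4)) = 1 := by
  ext i j
  simp only [P, Matrix.of_apply, Q, Matrix.cons_val_zero, Matrix.one_apply, Finset.prod_ite_zero]
  simp [funext_iff]

/-- expectation -/
noncomputable def ev {n : ℕ} (ψ : (Fin n → Fin 2) → ℂ) (s : Fin n → Fin 4) : ℂ :=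
  star ψ ⬝ᵥ (P s).mulVec ψ

lemma ev_real {n : ℕ} (ψ : (Fin n → Fin 2) → ℂ) (s : Fin n → Fin 4) :
    ev ψ s = ((ev ψ s).re : ℂ) := by
  have h : star (ev ψ s) = ev ψ s := by
    unfold ev
    rw [← Matrix.star_dotProduct_star, star_star, Matrix.star_mulVec, P_herm,
      ← Matrix.dotProduct_mulVec]
  exact (Complex.conj_eq_iff_re.mp h).symm

lemma chi_eq (n α : ℕ) (ψ : (Fin n → Fin 2) → ℂ) (i j : Fin n → Fin 4) :
    chi n α ψ i j = ((2 ^ n : ℂ)⁻¹) ^ 2 *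
      ((∏ k, phs (j k) (i k)) * ev ψ (fun k => opx (j k) (i k))) ^ α := by
  have h : (∏ k, phs (j k) (i k)) * ev ψ (fun k => opx (j k) (i k))
      = ∑ x, (P i).mulVec ψ x * star ((P j).mulVec ψ x) := by
    have : ∑ x, (P i).mulVec ψ x * star ((P j).mulVec ψ x)
        = star ((P j).mulVec ψ) ⬝ᵥ (P i).mulVec ψ := by
      simp [dotProduct, mul_comm]
    rw [this, Matrix.star_mulVec, P_herm, ← Matrix.dotProduct_mulVec, Matrix.mulVec_mulVec,
      P_mul, Matrix.smul_mulVec, dotProduct_smul, smul_eq_mul, ev]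
  rw [h, Fintype.sum_pow, Finset.mul_sum]
  simp only [chi, psi', Matrix.of_apply]
  refine Finset.sum_congr rfl fun f _ => ?_
  rw [Finset.prod_mul_distrib]
  simp only [map_mul, map_prod, map_inv₀, map_pow, Complex.conj_ofNat, starRingEnd_apply,
    star_ofNat]
  ring

lemma trace_eq (n α : ℕ) (ψ : (Fin n → Fin 2) → ℂ) :
    (chi n α ψ * chi n α ψ).trace = (((2 ^ n : ℝ)⁻¹ * A n α ψ : ℝ) : ℂ) := by
  have h1 : ∀ i j, chi n α ψ i j * chi n α ψ j i
      = ((2 ^ n : ℂ)⁻¹) ^ 4 * ev ψ (fun k => opx (i k) (j k)) ^ (2 * α) := by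
    intro i j
    have hc : (∏ k, phs (j k) (i k)) * (∏ k, phs (i k) (j k)) = 1 := by
      rw [← Finset.prod_mul_distrib]; simp [phs_mul]
    have ho : (fun k => opx (j k) (i k)) = fun k => opx (i k) (j k) :=
      funext fun k => opx_comm _ _
    rw [chi_eq, chi_eq, ho, mul_mul_mul_comm, ← mul_pow (_ * _) (_ * _) α,
      mul_mul_mul_comm (∏ k, phs (j k) (i k)), hc, pow_mul]
    ring
  have h2 : ∀ i : Fin n → Fin 4, ∑ j : Fin n → Fin 4, ev ψ (fun k => opx (i k) (j k)) ^ (2 * α)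
      = ∑ s, ev ψ s ^ (2 * α) := by
    intro i
    have hinv : Function.Involutive (fun (j : Fin n → Fin 4) k => opx (i k) (j k)) :=
      fun j => funext fun k => opx_invol _ _
    exact hinv.bijective.sum_comp (fun s => ev ψ s ^ (2 * α))
  have h3 : ∑ s, ev ψ s ^ (2 * α) = ((∑ s, (ev ψ s).re ^ (2 * α) : ℝ) : ℂ) := by
    push_cast
    exact Finset.sum_congr rfl fun s _ => by rw [← ev_real]
  simp only [Matrix.trace, Matrix.diag, Matrix.mul_apply, h1, ← Finset.mul_sum, h2]
  rw [h3, A]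
  simp only [Finset.sum_const, Finset.card_univ, Fintype.card_pi, Fintype.card_fin,
    Finset.prod_const, nsmul_eq_mul, ev]
  have h4 : (4 : ℂ) ^ n = (2 ^ n) ^ 2 := by rw [← pow_mul, mul_comm, pow_mul]; norm_num
  push_cast
  rw [h4]
  have : (2 : ℂ) ^ n ≠ 0 := pow_ne_zero _ two_ne_zero
  field_simp

lemma A_pos (n α : ℕ) (ψ : (Fin n → Fin 2) → ℂ) (hψ : star ψ ⬝ᵥ ψ = 1) : 0 < A n α ψ := by
  unfold A
  refine mul_pos (by positivity) (Finset.sum_pos' (fun s _ => ?_) ⟨fun _ => 0, Finset.mem_univ _, ?_⟩)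
  · rw [pow_mul]; positivity
  · rw [P_zero, Matrix.one_mulVec, hψ]; simp

theorem nonstabilizerness_entanglement_relation (n : ℕ) (hn : 1 ≤ n) (α : ℕ) (hα : 2 ≤ α)
    (ψ : (Fin n → Fin 2) → ℂ) (hψ : star ψ ⬝ᵥ ψ = 1) :
    (1 - (α : ℝ)) * ((1 - (α : ℝ))⁻¹ * Real.log (A n α ψ))
        + (- Real.log (((chi n α ψ * chi n α ψ).trace).re))
      = Real.log (2 ^ n : ℝ) := by
  have hA := A_pos n α ψ hψ
  have h1 : (1 - (α : ℝ)) ≠ 0 := by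
    have : (2 : ℝ) ≤ α := by exact_mod_cast hα
    linarith
  rw [mul_inv_cancel_left₀ h1, trace_eq, Complex.ofReal_re,
    Real.log_mul (by positivity) hA.ne', Real.log_inv]
  ring
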